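/- arXiv:math/0609319 — 3 statements merged into one kernel-verified Lean document; each statement's English description precedes it below -/
import Mathlib

section
/- Let W be a finite-dimensional real vector space with split nondegenerate symmetric bilinear form and let the Clifford algebra Cl(W) have relations w² = B(w,w)·1. For a Lagrangian subspace E ⊂ W, the left ideal Cl(W)·E generated by E is a maximal left ideal of Cl(W). -/
namespace CliffordAlgebra

variable {K V : Type*} [Field K] [AddCommGroup V] [Module K V] {Q : QuadraticForm K V}

/-- The left ideal of the Clifford algebra generated by a subspace. -/
def leftIdealSpan (Q : QuadraticForm K V) (E : Submodule K V) :
    Submodule (CliffordAlgebra Q) (CliffordAlgebra Q) :=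
  Submodule.span (CliffordAlgebra Q) (ι Q '' (E : Set V))

theorem ι_mem_leftIdealSpan {E : Submodule K V} {e : V} (he : e ∈ E) :
    ι Q e ∈ leftIdealSpan Q E :=
  Submodule.subset_span ⟨e, he, rfl⟩

/-- Left multiplication by finitely many pairwise anticommuting square-zero vectors has a common
nonzero kernel element. -/
theorem exists_ne_zero_forall_ι_mul_eq_zero [Nontrivial (CliffordAlgebra Q)] {E : Submodule K V}
    (hE : ∀ e ∈ E, Q e = 0) (s : Finset V) (hs : ∀ e ∈ s, e ∈ E) :
    ∃ y : CliffordAlgebra Q, y ≠ 0 ∧ ∀ e ∈ s, ι Q e * y = 0 := by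
  classical
  induction s using Finset.induction_on with
  | empty => exact ⟨1, one_ne_zero, by simp⟩
  | insert a s _ ih =>
    obtain ⟨y, hy, hsy⟩ := ih fun e he => hs e (Finset.mem_insert_of_mem he)
    have ha : a ∈ E := hs a (Finset.mem_insert_self a s)
    by_cases hay : ι Q a * y = 0
    · refine ⟨y, hy, fun e he => ?_⟩
      rcases Finset.mem_insert.1 he with rfl | he
      exacts [hay, hsy e he]
    · refine ⟨ι Q a * y, hay, fun e he => ?_⟩
      rcases Finset.mem_insert.1 he with rfl | hes
      · rw [← mul_assoc, ι_sq_scalar, hE e ha, map_zero, zero_mul]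
      · have hpolar : QuadraticMap.polar Q e a = 0 := by
          have heE := hs e he
          simp [QuadraticMap.polar, hE _ heE, hE _ ha, hE _ (E.add_mem heE ha)]
        have hanti := ι_mul_ι_add_swap (Q := Q) e a
        rw [hpolar, map_zero] at hanti
        rw [← mul_assoc, eq_neg_of_add_eq_zero_left hanti, neg_mul, mul_assoc, hsy e hes,
          mul_zero, neg_zero]

/-- The left ideal generated by a totally isotropic subspace is proper. -/
theorem leftIdealSpan_ne_top [FiniteDimensional K V] [Nontrivial (CliffordAlgebra Q)]
    {E : Submodule K V} (hE : ∀ e ∈ E, Q e = 0) : leftIdealSpan Q E ≠ ⊤ := by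
  intro htop
  obtain ⟨s, hs⟩ := (IsNoetherian.noetherian E : E.FG)
  obtain ⟨y, hy, hsy⟩ := exists_ne_zero_forall_ι_mul_eq_zero hE s fun e he =>
    hs ▸ Submodule.subset_span he
  have hEy : E ≤ LinearMap.ker ((LinearMap.mulRight K y).comp (ι Q)) := by
    rw [← hs, Submodule.span_le]
    intro e he
    simpa using hsy e he
  have hI : leftIdealSpan Q E ≤
      LinearMap.ker (LinearMap.toSpanSingleton (CliffordAlgebra Q) (CliffordAlgebra Q) y) := by
    refine Submodule.span_le.2 ?_
    rintro _ ⟨e, he, rfl⟩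
    simpa using hEy he
  have h1 := hI (htop ▸ Submodule.mem_top : (1 : CliffordAlgebra Q) ∈ leftIdealSpan Q E)
  exact hy (by simpa using h1)

/-- The elements congruent, modulo the left ideal generated by `E`, to a sum of products of fewer
than `n` vectors. -/
def leftIdealFiltration (Q : QuadraticForm K V) (E : Submodule K V) :
    ℕ → Submodule K (CliffordAlgebra Q)
  | 0 => (leftIdealSpan Q E).restrictScalars K
  | n + 1 => 1 ⊔ leftIdealFiltration Q E n ⊔ LinearMap.range (ι Q) * leftIdealFiltration Q E n

variable {E : Submodule K V}

theorem leftIdealFiltration_le_succ (n : ℕ) :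
    leftIdealFiltration Q E n ≤ leftIdealFiltration Q E (n + 1) :=
  le_sup_right.trans le_sup_left

theorem leftIdealFiltration_mono : Monotone (leftIdealFiltration Q E) :=
  monotone_nat_of_le_succ leftIdealFiltration_le_succ

theorem leftIdealSpan_le_leftIdealFiltration (n : ℕ) :
    (leftIdealSpan Q E).restrictScalars K ≤ leftIdealFiltration Q E n :=
  leftIdealFiltration_mono (Nat.zero_le n)

theorem one_mem_leftIdealFiltration_succ (n : ℕ) : 1 ∈ leftIdealFiltration Q E (n + 1) :=
  (le_sup_left.trans le_sup_left : _ ≤ leftIdealFiltration Q E (n + 1)) (Submodule.one_le.1 le_rfl)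

theorem ι_mul_mem_leftIdealFiltration_succ {n : ℕ} (w : V) {m : CliffordAlgebra Q}
    (hm : m ∈ leftIdealFiltration Q E n) : ι Q w * m ∈ leftIdealFiltration Q E (n + 1) :=
  (le_sup_right : _ ≤ leftIdealFiltration Q E (n + 1))
    (Submodule.mul_mem_mul (LinearMap.mem_range_self _ w) hm)

theorem leftIdealFiltration_succ_le {n : ℕ} {p : Submodule K (CliffordAlgebra Q)} (h1 : 1 ∈ p)
    (hle : leftIdealFiltration Q E n ≤ p)
    (hmul : ∀ w, ∀ m ∈ leftIdealFiltration Q E n, ι Q w * m ∈ p) :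
    leftIdealFiltration Q E (n + 1) ≤ p := by
  refine sup_le (sup_le (Submodule.one_le.2 h1) hle) (Submodule.mul_le.2 ?_)
  rintro _ ⟨w, rfl⟩ m hm
  exact hmul w m hm

theorem exists_mem_leftIdealFiltration (x : CliffordAlgebra Q) :
    ∃ n, x ∈ leftIdealFiltration Q E n := by
  induction x using left_induction with
  | algebraMap r =>
    refine ⟨1, ?_⟩
    rw [Algebra.algebraMap_eq_smul_one]
    exact Submodule.smul_mem _ r (one_mem_leftIdealFiltration_succ 0)
  | add x y hx hy =>
    obtain ⟨a, ha⟩ := hx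
    obtain ⟨b, hb⟩ := hy
    exact ⟨max a b, Submodule.add_mem _ (leftIdealFiltration_mono (le_max_left a b) ha)
      (leftIdealFiltration_mono (le_max_right a b) hb)⟩
  | ι_mul x w hx =>
    obtain ⟨n, hn⟩ := hx
    exact ⟨n + 1, ι_mul_mem_leftIdealFiltration_succ w hn⟩

theorem ι_mul_ι_mul_eq (e w : V) (m : CliffordAlgebra Q) :
    ι Q e * (ι Q w * m) = QuadraticMap.polar Q e w • m - ι Q w * (ι Q e * m) := by
  rw [← mul_assoc, ι_mul_ι_comm, sub_mul, mul_assoc, Algebra.smul_def]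

/-- Left multiplication by elements of `E` lowers the filtration. -/
theorem ι_mul_mem_leftIdealFiltration {n : ℕ} {e : V} (he : e ∈ E) {m : CliffordAlgebra Q}
    (hm : m ∈ leftIdealFiltration Q E (n + 1)) : ι Q e * m ∈ leftIdealFiltration Q E n := by
  have key : ∀ n, (∀ m ∈ leftIdealFiltration Q E n, ι Q e * m ∈ leftIdealFiltration Q E n ∧
      ∀ w, ι Q w * (ι Q e * m) ∈ leftIdealFiltration Q E n) →
      leftIdealFiltration Q E (n + 1) ≤
        (leftIdealFiltration Q E n).comap (LinearMap.mulLeft K (ι Q e)) := by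
    intro n ih
    refine leftIdealFiltration_succ_le ?_ (fun m hm => (ih m hm).1) fun w m hm => ?_
    · simpa using leftIdealSpan_le_leftIdealFiltration n (ι_mem_leftIdealSpan he)
    · rw [Submodule.mem_comap, LinearMap.mulLeft_apply, ι_mul_ι_mul_eq]
      exact Submodule.sub_mem _ (Submodule.smul_mem _ _ hm) ((ih m hm).2 w)
  refine key n ?_ hm
  clear hm
  induction n with
  | zero =>
    intro m hm
    have hem := (leftIdealSpan Q E).smul_mem (ι Q e) hm
    exact ⟨hem, fun w => (leftIdealSpan Q E).smul_mem (ι Q w) hem⟩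
  | succ n ih =>
    intro m hm
    have hem := key n ih hm
    exact ⟨leftIdealFiltration_le_succ n hem, fun w => ι_mul_mem_leftIdealFiltration_succ w hem⟩

/-- For vectors `e i` in `E` and `f i` dual to them modulo `E`, the number operator
`∑ i, f i * e i` acts as the scalar `n` on the `n`-th graded piece of the filtration. -/
theorem sum_ι_mul_ι_mul_sub_mem_leftIdealFiltration {κ : Type*} [Fintype κ] {e f : κ → V}
    (he : ∀ i, e i ∈ E) (hf : ∀ w, w - ∑ i, QuadraticMap.polar Q (e i) w • f i ∈ E) {n : ℕ}
    {m : CliffordAlgebra Q} (hm : m ∈ leftIdealFiltration Q E (n + 1)) :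
    (∑ i, ι Q (f i) * ι Q (e i)) * m - n • m ∈ leftIdealFiltration Q E n := by
  set N := ∑ i, ι Q (f i) * ι Q (e i) with hN
  have hNI : N ∈ leftIdealSpan Q E := Submodule.sum_mem _ fun i _ =>
    (leftIdealSpan Q E).smul_mem (ι Q (f i)) (ι_mem_leftIdealSpan (he i))
  have key : leftIdealFiltration Q E (n + 1) ≤ (leftIdealFiltration Q E n).comap
      (LinearMap.mulLeft K N - n • LinearMap.id) := by
    clear hm
    induction n with
    | zero =>
      refine leftIdealFiltration_succ_le ?_ (fun m hm => ?_) fun w m hm => ?_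
      · simpa using leftIdealSpan_le_leftIdealFiltration 0 hNI
      · simpa using leftIdealSpan_le_leftIdealFiltration 0 ((leftIdealSpan Q E).smul_mem N hm)
      · simpa using leftIdealSpan_le_leftIdealFiltration 0
          ((leftIdealSpan Q E).smul_mem N ((leftIdealSpan Q E).smul_mem (ι Q w) hm))
    | succ n ih =>
      refine leftIdealFiltration_succ_le ?_ (fun m hm => ?_) fun w m hm => ?_
      · have h1 := (leftIdealFiltration Q E (n + 1)).sub_mem
          (leftIdealSpan_le_leftIdealFiltration (n + 1) hNI)
          (nsmul_mem (one_mem_leftIdealFiltration_succ n) (n + 1))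
        simpa using h1
      · have h1 := (leftIdealFiltration Q E (n + 1)).sub_mem
          (leftIdealFiltration_le_succ n (ih hm)) hm
        simpa [add_mul, sub_sub] using h1
      · have hcomm : N * (ι Q w * m) = ι Q w * m
            - ι Q (w - ∑ i, QuadraticMap.polar Q (e i) w • f i) * m
            - ∑ i, QuadraticMap.polar Q (f i) w • (ι Q (e i) * m) + ι Q w * (N * m) := by
          have h1 : ∀ i, ι Q (f i) * ι Q (e i) * (ι Q w * m) =
              QuadraticMap.polar Q (e i) w • (ι Q (f i) * m)
              - QuadraticMap.polar Q (f i) w • (ι Q (e i) * m)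
              + ι Q w * (ι Q (f i) * ι Q (e i) * m) := by
            intro i
            rw [mul_assoc, ι_mul_ι_mul_eq (e i) w, mul_sub, mul_smul_comm,
              ι_mul_ι_mul_eq (f i) w, mul_assoc]
            abel
          rw [hN, Finset.sum_mul, Finset.sum_congr rfl fun i _ => h1 i, Finset.sum_add_distrib,
            Finset.sum_sub_distrib, Finset.sum_mul, Finset.mul_sum, map_sub, map_sum, sub_mul,
            Finset.sum_mul]
          simp only [map_smul, smul_mul_assoc]
          abel
        have hlow : ι Q w * (N * m - n • m) ∈ leftIdealFiltration Q E (n + 1) :=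
          ι_mul_mem_leftIdealFiltration_succ w (ih hm)
        have hew : ι Q (w - ∑ i, QuadraticMap.polar Q (e i) w • f i) * m ∈
            leftIdealFiltration Q E (n + 1) :=
          leftIdealFiltration_le_succ n (ι_mul_mem_leftIdealFiltration (hf w) hm)
        have hsum : ∑ i, QuadraticMap.polar Q (f i) w • (ι Q (e i) * m) ∈
            leftIdealFiltration Q E (n + 1) :=
          Submodule.sum_mem _ fun i _ => Submodule.smul_mem _ _
            (leftIdealFiltration_le_succ n (ι_mul_mem_leftIdealFiltration (he i) hm))
        have hall := Submodule.sub_mem _ (Submodule.sub_mem _ hlow hew) hsum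
        rw [Submodule.mem_comap]
        convert hall using 1
        simp only [LinearMap.sub_apply, LinearMap.add_apply, LinearMap.mulLeft_apply,
          LinearMap.smul_apply, LinearMap.id_apply, hcomm, add_smul, one_smul, mul_sub,
          mul_smul_comm]
        abel
  simpa using key hm

/-- A left ideal strictly containing the one generated by `E` is everything, provided that `E` has
a system of vectors dual to it modulo `E`. -/
theorem eq_top_of_leftIdealSpan_lt [CharZero K] {κ : Type*} [Fintype κ] {e f : κ → V}
    (he : ∀ i, e i ∈ E) (hf : ∀ w, w - ∑ i, QuadraticMap.polar Q (e i) w • f i ∈ E)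
    {J : Submodule (CliffordAlgebra Q) (CliffordAlgebra Q)} (hJ : leftIdealSpan Q E < J) :
    J = ⊤ := by
  classical
  obtain ⟨hIJ, x₀, hx₀J, hx₀I⟩ := SetLike.lt_iff_le_and_exists.1 hJ
  have hex : ∃ n, ∃ x ∈ J, x ∉ leftIdealSpan Q E ∧ x ∈ leftIdealFiltration Q E n := by
    obtain ⟨n, hn⟩ := exists_mem_leftIdealFiltration (E := E) x₀
    exact ⟨n, x₀, hx₀J, hx₀I, hn⟩
  obtain ⟨x, hxJ, hxI, hx⟩ := Nat.find_spec hex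
  have hmin : ∀ k < Nat.find hex, ∀ y ∈ J, y ∈ leftIdealFiltration Q E k →
      y ∈ leftIdealSpan Q E := fun k hk y hyJ hy => by
    by_contra hyI
    exact Nat.find_min hex hk ⟨y, hyJ, hyI, hy⟩
  generalize Nat.find hex = n at hx hmin
  rcases n with _ | k
  · exact absurd hx hxI
  have hNx : (∑ i, ι Q (f i) * ι Q (e i)) * x ∈ leftIdealSpan Q E := by
    rw [Finset.sum_mul]
    refine Submodule.sum_mem _ fun i _ => ?_
    rw [mul_assoc]
    exact (leftIdealSpan Q E).smul_mem (ι Q (f i)) (hmin k k.lt_succ_self _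
      (J.smul_mem (ι Q (e i)) hxJ) (ι_mul_mem_leftIdealFiltration (he i) hx))
  rcases k with _ | k
  · have hle : leftIdealFiltration Q E 1 ≤ 1 ⊔ (leftIdealSpan Q E).restrictScalars K :=
      leftIdealFiltration_succ_le (Submodule.mem_sup_left (Submodule.one_le.1 le_rfl)) le_sup_right
        fun w m hm => Submodule.mem_sup_right ((leftIdealSpan Q E).smul_mem (ι Q w) hm)
    obtain ⟨_, hc, y, hy, rfl⟩ := Submodule.mem_sup.1 (hle hx)
    obtain ⟨c, rfl⟩ := Submodule.mem_one.1 hc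
    have hc0 : c ≠ 0 := by
      rintro rfl
      exact hxI (by simpa using hy)
    have hcJ : algebraMap K (CliffordAlgebra Q) c ∈ J := (J.add_mem_iff_left (hIJ hy)).1 hxJ
    have h1 := J.smul_mem (algebraMap K (CliffordAlgebra Q) c⁻¹) hcJ
    rw [smul_eq_mul, ← map_mul, inv_mul_cancel₀ hc0, map_one] at h1
    exact (Ideal.eq_top_iff_one J).2 h1
  · refine absurd (hmin (k + 1) (Nat.lt_succ_self _) x hxJ ?_) hxI
    have h1 := Submodule.sub_mem _ (leftIdealSpan_le_leftIdealFiltration (k + 1) hNx)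
      (sum_ι_mul_ι_mul_sub_mem_leftIdealFiltration he hf hx)
    rw [sub_sub_cancel, ← Nat.cast_smul_eq_nsmul K] at h1
    exact (Submodule.smul_mem_iff _ (Nat.cast_ne_zero.2 k.succ_ne_zero)).1 h1

end CliffordAlgebra

/-- A subspace of a nondegenerate bilinear space has a basis and a family of vectors dual to
it. -/
theorem LinearMap.BilinForm.Nondegenerate.exists_dual_family {K V : Type*} [Field K]
    [AddCommGroup V] [Module K V] [FiniteDimensional K V] {B : LinearMap.BilinForm K V}
    (hB : B.Nondegenerate) (hsymm : B.IsSymm) (E : Submodule K V) :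
    ∃ (b : Module.Basis (Fin (Module.finrank K E)) K E) (f : Fin (Module.finrank K E) → V),
      ∀ i j, B (b i) (f j) = if i = j then 1 else 0 := by
  let b := Module.finBasis K E
  choose g hg using fun i => (b.coord i).exists_extend
  refine ⟨b, fun j => (B.toDual hB).symm (g j), fun i j => ?_⟩
  rw [← hsymm.eq, LinearMap.BilinForm.apply_toDual_symm_apply]
  have h := LinearMap.congr_fun (hg j) (b i)
  simpa [Finsupp.single_apply] using h


/-- For a Lagrangian subspace `E` of a finite-dimensional split real
quadratic space `(W,B)` (Lagrangian: `E` equals its `B`-orthogonal complement), the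
left ideal `Cl(W)·E` of the Clifford algebra generated by `E` is a maximal left ideal
(a coatom in the lattice of left ideals, i.e. of `Cl(W)`-submodules of `Cl(W)`).
Convention: `Q = (1/2) • B`, so `w² = (B w w / 2)·1` in `Cl(W)`. -/
theorem stmt10 {W : Type*} [AddCommGroup W] [Module ℝ W] [FiniteDimensional ℝ W]
    (B : LinearMap.BilinForm ℝ W) (hsymm : B.IsSymm) (hnd : B.Nondegenerate)
    (E : Submodule ℝ W)
    (hLag : (E : Set W) = {w : W | ∀ e ∈ E, B w e = 0}) :
    IsCoatom
      (Submodule.span (CliffordAlgebra (((1/2 : ℝ) • B).toQuadraticMap))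
        (CliffordAlgebra.ι (((1/2 : ℝ) • B).toQuadraticMap) '' (E : Set W))) := by
  have hpolar : ∀ v w, QuadraticMap.polar (((1/2 : ℝ) • B).toQuadraticMap) v w = B v w := by
    intro v w
    have h : B w v = B v w := hsymm.eq w v
    simp only [QuadraticMap.polar, LinearMap.BilinMap.toQuadraticMap_apply, LinearMap.smul_apply,
      map_add, LinearMap.add_apply, smul_eq_mul, h]
    ring
  have hmem : ∀ w, w ∈ E ↔ ∀ e ∈ E, B w e = 0 := fun w => Set.ext_iff.1 hLag w
  have hE : ∀ e ∈ E, ((1/2 : ℝ) • B).toQuadraticMap e = 0 := fun e he => by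
    simp [(hmem e).1 he e he]
  have : Invertible (2 : ℝ) := invertibleOfNonzero two_ne_zero
  obtain ⟨b, f, hbf⟩ := hnd.exists_dual_family hsymm E
  refine ⟨CliffordAlgebra.leftIdealSpan_ne_top hE, fun J hJ =>
    CliffordAlgebra.eq_top_of_leftIdealSpan_lt (fun i => (b i).2) (f := f) (fun w => ?_) hJ⟩
  simp only [hpolar]
  rw [hmem]
  intro e he
  have hker : ((B (w - ∑ i, B (b i) w • f i)).comp E.subtype) = 0 := by
    refine b.ext fun j => ?_
    have h : B (b j) (w - ∑ i, B (b i) w • f i) = 0 := by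
      simp [map_sum, hbf]
    simpa only [LinearMap.comp_apply, Submodule.subtype_apply, LinearMap.zero_apply] using
      (hsymm.eq _ _).trans h
  exact LinearMap.congr_fun hker ⟨e, he⟩
end

section
/- Let W be a finite-dimensional real vector space with split nondegenerate symmetric bilinear form. Then the Clifford algebra Cl(W) has no nontrivial two-sided ideals, i.e. Cl(W) is a simple algebra. Consequently, for any nonzero Cl(W)-module 𝒮, the action map ρ: Cl(W) → End(𝒮) is injective. -/
namespace ExteriorAlgebra

variable {K V n : Type*} [Field K] [AddCommGroup V] [Module K V] [Fintype n]

/-- The number operator `x ↦ ∑ i, b i ∧ (b i* ⌋ x)`, acting on `⋀[K]^k V` as multiplication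
by `k`. -/
noncomputable def numberOp (b : Module.Basis n K V) :
    ExteriorAlgebra K V →ₗ[K] ExteriorAlgebra K V :=
  ∑ i, LinearMap.mulLeft K (ι K (b i)) ∘ₗ CliffordAlgebra.contractLeft (b.coord i)

theorem numberOp_apply (b : Module.Basis n K V) (x : ExteriorAlgebra K V) :
    numberOp b x = ∑ i, ι K (b i) * CliffordAlgebra.contractLeft (b.coord i) x := by
  simp [numberOp]

theorem numberOp_algebraMap (b : Module.Basis n K V) (r : K) :
    numberOp b (algebraMap K _ r) = 0 := by
  simp [numberOp_apply]

theorem numberOp_ι_mul (b : Module.Basis n K V) (v : V) (x : ExteriorAlgebra K V) :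
    numberOp b (ι K v * x) = ι K v * x + ι K v * numberOp b x := by
  have key (i : n) : ι K (b i) * CliffordAlgebra.contractLeft (b.coord i) (ι K v * x) =
      ι K (b.coord i v • b i) * x +
        ι K v * (ι K (b i) * CliffordAlgebra.contractLeft (b.coord i) x) := by
    have hswap : ι K v * ι K (b i) = -(ι K (b i) * ι K v) :=
      eq_neg_of_add_eq_zero_left (ι_add_mul_swap v (b i))
    rw [ι, CliffordAlgebra.contractLeft_ι_mul, ← ι, mul_sub, ← mul_assoc, ← mul_assoc, hswap,
      map_smul, mul_smul_comm, smul_mul_assoc, neg_mul, sub_eq_add_neg]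
  simp only [numberOp_apply, key, Finset.sum_add_distrib, ← Finset.sum_mul, ← Finset.mul_sum,
    ← map_sum, Module.Basis.coord_apply, b.sum_repr]

theorem numberOp_of_mem (b : Module.Basis n K V) {k : ℕ} {x : ExteriorAlgebra K V}
    (hx : x ∈ ⋀[K]^k V) : numberOp b x = k • x := by
  induction hx using Submodule.pow_induction_on_left' with
  | algebraMap r => simp [numberOp_algebraMap]
  | add x y i hx hy ihx ihy => rw [map_add, ihx, ihy, smul_add]
  | mem_mul m hm i x hx ih =>
    obtain ⟨v, rfl⟩ := hm
    rw [numberOp_ι_mul, ih, mul_smul_comm, succ_nsmul']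

theorem proj_numberOp (b : Module.Basis n K V) (k : ℕ) (x : ExteriorAlgebra K V) :
    GradedRing.proj (fun i : ℕ ↦ ⋀[K]^i V) k (numberOp b x) =
      k • GradedRing.proj (fun i : ℕ ↦ ⋀[K]^i V) k x := by
  refine @DirectSum.Decomposition.inductionOn _ _ _ _ _ _ _ (fun i : ℕ ↦ ⋀[K]^i V)
    (gradedAlgebra K V).toDecomposition
    (fun y ↦ GradedRing.proj (fun i : ℕ ↦ ⋀[K]^i V) k (numberOp b y) =
      k • GradedRing.proj (fun i : ℕ ↦ ⋀[K]^i V) k y)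
    ?_ (fun {j} m ↦ ?_) (fun x y ihx ihy ↦ ?_) x
  · simp
  · rw [numberOp_of_mem b m.2, map_nsmul]
    rcases eq_or_ne j k with rfl | hjk
    · rfl
    · rw [GradedRing.proj_apply, DirectSum.decompose_of_mem_ne (fun i : ℕ ↦ ⋀[K]^i V) m.2 hjk,
        smul_zero, smul_zero]
  · rw [map_add, map_add, ihx, ihy, map_add, smul_add]

theorem exists_eq_algebraMap_of_contractLeft_eq_zero [CharZero K] [FiniteDimensional K V]
    {x : ExteriorAlgebra K V}
    (hx : ∀ d : Module.Dual K V, CliffordAlgebra.contractLeft d x = 0) :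
    ∃ r : K, x = algebraMap K _ r := by
  have h0 : numberOp (Module.finBasis K V) x = 0 := by simp [numberOp_apply, hx]
  have hk (k : ℕ) (hk : k ≠ 0) : GradedRing.proj (fun i : ℕ ↦ ⋀[K]^i V) k x = 0 := by
    have h := proj_numberOp (Module.finBasis K V) k x
    rw [h0, map_zero, ← Nat.cast_smul_eq_nsmul K] at h
    exact (smul_eq_zero.mp h.symm).resolve_left (Nat.cast_ne_zero.mpr hk)
  have hmem : x ∈ ⋀[K]^0 V := by
    classical
    rw [← DirectSum.sum_support_decompose (fun i : ℕ ↦ ⋀[K]^i V) x]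
    refine Submodule.sum_mem _ fun k _ ↦ ?_
    rcases eq_or_ne k 0 with rfl | hk0
    · exact SetLike.coe_mem _
    · rw [← GradedRing.proj_apply, hk k hk0]
      exact Submodule.zero_mem _
  rw [exteriorPower, pow_zero, Submodule.mem_one] at hmem
  exact hmem.imp fun _ h ↦ h.symm

end ExteriorAlgebra

namespace CliffordAlgebra

variable {K V : Type*} [Field K] [AddCommGroup V] [Module K V] {Q : QuadraticForm K V}

theorem exists_eq_algebraMap_of_contractLeft_eq_zero [CharZero K] [FiniteDimensional K V]
    {x : CliffordAlgebra Q} (hx : ∀ d : Module.Dual K V, contractLeft d x = 0) :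
    ∃ r : K, x = algebraMap K _ r := by
  have : Invertible (2 : K) := invertibleOfNonzero two_ne_zero
  obtain ⟨r, hr⟩ := ExteriorAlgebra.exists_eq_algebraMap_of_contractLeft_eq_zero
    (x := equivExterior Q x) fun d ↦ by
      have h := changeForm_contractLeft (changeForm.associated_neg_proof (Q := Q)) d x
      rw [hx, map_zero] at h
      exact h.symm
  refine ⟨r, (equivExterior Q).injective (hr.trans ?_)⟩
  exact (changeForm_algebraMap changeForm.associated_neg_proof r).symm

/-- Contraction with `polar Q w` is the supercommutator with `ι Q w`. -/
theorem contractLeft_polarBilin (w : V) (x : CliffordAlgebra Q) :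
    contractLeft (Q.polarBilin w) x = ι Q w * x - involute x * ι Q w := by
  induction x using left_induction with
  | algebraMap r => simp [Algebra.commutes r (ι Q w)]
  | add x y hx hy => rw [map_add, hx, hy, map_add]; noncomm_ring
  | ι_mul x v hx =>
    have hswap : ι Q w * ι Q v = algebraMap K _ (QuadraticMap.polar Q w v) - ι Q v * ι Q w :=
      ι_mul_ι_comm w v
    rw [contractLeft_ι_mul, hx, map_mul, involute_ι, ← mul_assoc (ι Q w), hswap, sub_mul,
      ← Algebra.smul_def, QuadraticMap.polarBilin_apply_apply]
    noncomm_ring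

/-- In even dimension the product of an orthogonal basis is a unit anticommuting with all
vectors. -/
theorem exists_isUnit_anticomm [Invertible (2 : K)] [FiniteDimensional K V]
    (hQ : Q.polarBilin.Nondegenerate) (heven : Even (Module.finrank K V)) :
    ∃ u : (CliffordAlgebra Q)ˣ, ∀ w : V, ↑u * ι Q w = -(ι Q w * u) := by
  obtain ⟨b, hb⟩ := LinearMap.BilinForm.exists_orthogonal_basis (B := Q.polarBilin)
    ⟨fun v w ↦ QuadraticMap.polar_comm Q v w⟩
  have hunit (i) : IsUnit (ι Q (b i)) := by
    refine isUnit_ι_of_isUnit Q (IsUnit.mk0 _ fun h ↦ ?_)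
    refine hb.not_isOrtho_basis_self_of_separatingLeft hQ.1 i ?_
    rw [QuadraticMap.polarBilin_apply_apply, QuadraticMap.polar_self, h, smul_zero]
  have hswap {i j} (hij : i ≠ j) : ι Q (b i) * ι Q (b j) = -(ι Q (b j) * ι Q (b i)) := by
    rw [ι_mul_ι_comm, show QuadraticMap.polar Q (b i) (b j) = 0 from hb hij, map_zero, zero_sub]
  have key (s : Finset (Fin (Module.finrank K V))) : ∃ u : (CliffordAlgebra Q)ˣ,
      (∀ j ∉ s, ↑u * ι Q (b j) = (-1) ^ s.card * (ι Q (b j) * u)) ∧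
      (∀ j ∈ s, ↑u * ι Q (b j) = -((-1) ^ s.card * (ι Q (b j) * u))) := by
    induction s using Finset.induction_on with
    | empty => exact ⟨1, by simp, by simp⟩
    | insert a s ha ih =>
      obtain ⟨u, hout, hin⟩ := ih
      have hcomm (c : CliffordAlgebra Q) : c * (-1) ^ s.card = (-1) ^ s.card * c :=
        ((Commute.neg_one_right c).pow_right _)
      refine ⟨(hunit a).unit * u, fun j hj ↦ ?_, fun j hj ↦ ?_⟩
      · rw [Finset.mem_insert, not_or] at hj
        rw [Finset.card_insert_of_notMem ha, Units.val_mul, IsUnit.unit_spec, mul_assoc,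
          hout j hj.2, ← mul_assoc, hcomm, mul_assoc, ← mul_assoc (ι Q (b a)),
          hswap (Ne.symm hj.1), pow_succ]
        noncomm_ring
      · rw [Finset.card_insert_of_notMem ha, Units.val_mul, IsUnit.unit_spec, mul_assoc]
        rcases Finset.mem_insert.mp hj with rfl | hjs
        · rw [hout j ha, ← mul_assoc, hcomm, mul_assoc, pow_succ]
          noncomm_ring
        · rw [hin j hjs, mul_neg, ← mul_assoc, hcomm, mul_assoc, ← mul_assoc (ι Q (b a)),
            hswap (ne_of_mem_of_not_mem hjs ha).symm, pow_succ]
          noncomm_ring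
  obtain ⟨u, -, hu⟩ := key Finset.univ
  rw [Finset.card_univ, Fintype.card_fin, heven.neg_one_pow] at hu
  refine ⟨u, fun w ↦ LinearMap.congr_fun (f := LinearMap.mulLeft K (u : CliffordAlgebra Q) ∘ₗ ι Q)
    (g := -(LinearMap.mulRight K (u : CliffordAlgebra Q) ∘ₗ ι Q)) (b.ext fun i ↦ ?_) w⟩
  simpa using hu i (Finset.mem_univ i)

theorem involute_eq_conj {u : (CliffordAlgebra Q)ˣ} (hu : ∀ w : V, ↑u * ι Q w = -(ι Q w * u))
    (x : CliffordAlgebra Q) : involute x = u * x * ↑u⁻¹ := by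
  rw [Units.eq_mul_inv_iff_mul_eq]
  induction x using left_induction with
  | algebraMap r => rw [AlgHom.commutes, Algebra.commutes]
  | add x y hx hy => rw [map_add, add_mul, hx, hy, mul_add]
  | ι_mul x v hx => rw [map_mul, involute_ι, mul_assoc, hx, ← mul_assoc (u : CliffordAlgebra Q), hu,
      neg_mul, neg_mul, mul_assoc]

/-- A nonzero set stable under contractions has a nonzero element killed by all of them. -/
theorem exists_ne_zero_contractLeft_eq_zero [FiniteDimensional K V] {I : Set (CliffordAlgebra Q)}
    (hI : ∀ d : Module.Dual K V, ∀ x ∈ I, contractLeft d x ∈ I)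
    (hne : ∃ x ∈ I, x ≠ 0) :
    ∃ x ∈ I, x ≠ 0 ∧ ∀ d : Module.Dual K V, contractLeft d x = 0 := by
  let b := Module.finBasis K (Module.Dual K V)
  have key (s : Finset (Fin (Module.finrank K (Module.Dual K V)))) :
      ∃ x ∈ I, x ≠ 0 ∧ ∀ i ∈ s, contractLeft (b i) x = 0 := by
    induction s using Finset.induction_on with
    | empty => simpa using hne
    | insert a s ha ih =>
      obtain ⟨x, hxI, hx0, hx⟩ := ih
      by_cases h : contractLeft (b a) x = 0
      · exact ⟨x, hxI, hx0, by simpa [h] using hx⟩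
      · refine ⟨contractLeft (b a) x, hI _ _ hxI, h, fun i hi ↦ ?_⟩
        rcases Finset.mem_insert.mp hi with rfl | his
        · exact contractLeft_contractLeft _ _
        · rw [contractLeft_comm, hx i his, map_zero, neg_zero]
  obtain ⟨x, hxI, hx0, hx⟩ := key Finset.univ
  refine ⟨x, hxI, hx0, fun d ↦ LinearMap.congr_fun (f := contractLeft.flip x) (g := 0) ?_ d⟩
  exact b.ext fun i ↦ hx i (Finset.mem_univ i)

/-- The Clifford algebra of a nondegenerate even-dimensional quadratic space is simple. -/
theorem isSimpleRing_of_even_finrank [CharZero K] [FiniteDimensional K V]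
    (hQ : Q.polarBilin.Nondegenerate) (heven : Even (Module.finrank K V)) :
    IsSimpleRing (CliffordAlgebra Q) := by
  have : Invertible (2 : K) := invertibleOfNonzero two_ne_zero
  refine IsSimpleRing.of_eq_bot_or_eq_top fun I ↦ or_iff_not_imp_left.mpr fun hI ↦ ?_
  obtain ⟨u, hu⟩ := exists_isUnit_anticomm hQ heven
  have hcontract (d : Module.Dual K V) (x) (hx : x ∈ I) : contractLeft d x ∈ I := by
    obtain ⟨w, rfl⟩ := (LinearMap.BilinForm.toDual Q.polarBilin hQ).surjective d
    change contractLeft (Q.polarBilin w) x ∈ I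
    rw [contractLeft_polarBilin, involute_eq_conj hu]
    exact I.sub_mem (I.mul_mem_left _ _ hx)
      (I.mul_mem_right _ _ (I.mul_mem_right _ _ (I.mul_mem_left _ _ hx)))
  have hne : ∃ x ∈ I, x ≠ 0 := by
    by_contra! h
    exact hI (le_bot_iff.mp fun x hx ↦ (TwoSidedIdeal.mem_bot _).mpr (h x hx))
  obtain ⟨x, hxI, hx0, hx⟩ := exists_ne_zero_contractLeft_eq_zero (I := {x | x ∈ I}) hcontract hne
  obtain ⟨r, rfl⟩ := exists_eq_algebraMap_of_contractLeft_eq_zero hx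
  have hr : r ≠ 0 := fun h ↦ hx0 (by rw [h, map_zero])
  rw [← TwoSidedIdeal.one_mem_iff]
  simpa [← map_mul, inv_mul_cancel₀ hr] using I.mul_mem_left (algebraMap K _ r⁻¹) _ hxI

end CliffordAlgebra

/-- A nondegenerate space with a Lagrangian subspace has even dimension. -/
theorem LinearMap.BilinForm.even_finrank_of_eq_orthogonal {K V : Type*} [Field K]
    [AddCommGroup V] [Module K V] [FiniteDimensional K V] {B : LinearMap.BilinForm K V}
    (hnd : B.Nondegenerate) {E : Submodule K V} (hE : E = B.orthogonal E) :
    Even (Module.finrank K V) := by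
  have h := LinearMap.BilinForm.finrank_orthogonal hnd E
  rw [← hE] at h
  have := E.finrank_le
  exact ⟨Module.finrank K E, by omega⟩

/-- The Clifford algebra of a finite-dimensional split real quadratic space
`(W,B)` (split: `W` admits a Lagrangian subspace) is simple — it has no two-sided ideals
other than `0` and the whole algebra — and consequently for any nonzero module `𝒮` over
`Cl(W)` the action map `Cl(W) → End(𝒮)` is injective.
Convention: `Q = (1/2) • B`, so `w² = (B w w / 2)·1`. -/
theorem stmt11 {W : Type*} [AddCommGroup W] [Module ℝ W] [FiniteDimensional ℝ W]
    (B : LinearMap.BilinForm ℝ W) (hsymm : B.IsSymm) (hnd : B.Nondegenerate)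
    (hsplit : ∃ E : Submodule ℝ W, (E : Set W) = {w : W | ∀ e ∈ E, B w e = 0})
    (𝒮 : Type*) [AddCommGroup 𝒮]
    [Module (CliffordAlgebra (((1/2 : ℝ) • B).toQuadraticMap)) 𝒮] [Nontrivial 𝒮] :
    (∀ I : TwoSidedIdeal (CliffordAlgebra (((1/2 : ℝ) • B).toQuadraticMap)),
        I = ⊥ ∨ I = ⊤) ∧
    Function.Injective
      (fun x : CliffordAlgebra (((1/2 : ℝ) • B).toQuadraticMap) =>
        (fun s : 𝒮 => x • s)) := by
  have hpolar : ((1/2 : ℝ) • B).toQuadraticMap.polarBilin = B := by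
    ext v w
    have h : B w v = B v w := hsymm.eq w v
    simp only [LinearMap.BilinMap.polarBilin_toQuadraticMap, LinearMap.add_apply,
      LinearMap.flip_apply, LinearMap.smul_apply, h, smul_eq_mul]
    ring
  obtain ⟨E, hE⟩ := hsplit
  have hEorth : E = B.orthogonal E := by
    ext w
    rw [← SetLike.mem_coe, hE, LinearMap.BilinForm.mem_orthogonal_iff]
    exact forall₂_congr fun e _ ↦ by rw [← hsymm.eq w e]
  have : IsSimpleRing (CliffordAlgebra (((1/2 : ℝ) • B).toQuadraticMap)) :=
    CliffordAlgebra.isSimpleRing_of_even_finrank (by rwa [hpolar])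
      (LinearMap.BilinForm.even_finrank_of_eq_orthogonal hnd hEorth)
  have : Nontrivial (AddMonoid.End 𝒮) := by
    obtain ⟨s, hs⟩ := exists_ne (0 : 𝒮)
    exact ⟨1, 0, fun h ↦ hs (DFunLike.congr_fun h s)⟩
  refine ⟨eq_bot_or_eq_top, fun x y hxy ↦ ?_⟩
  exact (Module.toAddMonoidEnd (CliffordAlgebra (((1/2 : ℝ) • B).toQuadraticMap)) 𝒮).injective
    (AddMonoidHom.ext (congrFun hxy))
end

section
/- Let V be a finite-dimensional real vector space, E ⊂ 𝕍 = V ⊕ V* a Lagrangian subspace with range S = pr_V(E) and associated 2-form ω_S on S. Choose any extension ω of ω_S to a 2-form on V and a nonzero element μ of the top exterior power of ann(S) ⊂ V*. Then φ = e^{−ω} ∧ μ ∈ ΛV* is a pure spinor with null space N_φ = E, and φ is independent of the choice of extension ω. -/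
set_option synthInstance.maxHeartbeats 1000000
set_option maxHeartbeats 1000000

open Module

/-- The canonical split pairing on `𝕍 = V ⊕ V*`. -/
def vPair {V : Type*} [AddCommGroup V] [Module ℝ V]
    (p q : V × Module.Dual ℝ V) : ℝ :=
  p.2 q.1 + q.2 p.1

/-- The orthogonal complement of a set in `𝕍 = V ⊕ V*` for the canonical pairing. -/
def vPerp {V : Type*} [AddCommGroup V] [Module ℝ V]
    (S : Set (V × Module.Dual ℝ V)) : Set (V × Module.Dual ℝ V) :=
  {w | ∀ e ∈ S, vPair w e = 0}

/-- The contravariant spinor action of `𝕍 = V ⊕ V*` on `ΛV*`: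
`ρ(v ⊕ α)φ = α ∧ φ + ι_v φ`. -/
noncomputable def rho {V : Type*} [AddCommGroup V] [Module ℝ V]
    (w : V × Module.Dual ℝ V) (φ : ExteriorAlgebra ℝ (Module.Dual ℝ V)) :
    ExteriorAlgebra ℝ (Module.Dual ℝ V) :=
  ExteriorAlgebra.ι ℝ w.2 * φ +
    CliffordAlgebra.contractLeft (Module.Dual.eval ℝ V w.1) φ

/-- The null space `N_φ = {w ∈ 𝕍 : ρ(w)φ = 0}` of a spinor `φ ∈ ΛV*`. -/
def nullSet {V : Type*} [AddCommGroup V] [Module ℝ V]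
    (φ : ExteriorAlgebra ℝ (Module.Dual ℝ V)) : Set (V × Module.Dual ℝ V) :=
  {w | rho w φ = 0}

/-- The spinor `e^{−ω} ∧ μ ∈ ΛV*`, where `ω` is (the exterior-algebra incarnation of) a
2-form on `V` and `μ = b₁ ∧ ⋯ ∧ b_k`. -/
noncomputable def expSpinor {V : Type*} [AddCommGroup V] [Module ℝ V]
    [FiniteDimensional ℝ V] (ωel : ExteriorAlgebra ℝ (Module.Dual ℝ V))
    {k : ℕ} (b : Fin k → Module.Dual ℝ V) : ExteriorAlgebra ℝ (Module.Dual ℝ V) :=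
  (∑ j ∈ Finset.range (Module.finrank ℝ V + 1),
      ((-1 : ℝ) ^ j / (j.factorial : ℝ)) • ωel ^ j) *
    (List.ofFn fun i : Fin k => ExteriorAlgebra.ι ℝ (b i)).prod

section Contraction

variable {R M : Type*} [CommRing R] [AddCommGroup M] [Module R M]

theorem ι_mul_ι_swap (x y : M) :
    ExteriorAlgebra.ι R x * ExteriorAlgebra.ι R y =
      -(ExteriorAlgebra.ι R y * ExteriorAlgebra.ι R x) :=
  eq_neg_of_add_eq_zero_left (ExteriorAlgebra.ι_add_mul_swap x y)

/-- Contraction of an exterior product with a vector, one factor at a time. -/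
theorem contractLeft_ι_wedge (d : Module.Dual R M) (x : M) (a : ExteriorAlgebra R M) :
    CliffordAlgebra.contractLeft d (ExteriorAlgebra.ι R x * a) =
      d x • a - ExteriorAlgebra.ι R x * CliffordAlgebra.contractLeft d a :=
  CliffordAlgebra.contractLeft_ι_mul d x a

theorem contractLeft_ι_eq (d : Module.Dual R M) (x : M) :
    CliffordAlgebra.contractLeft d (ExteriorAlgebra.ι R x) = algebraMap R _ (d x) :=
  CliffordAlgebra.contractLeft_ι 0 d x

/-- An exterior product of covectors killed by `d` is killed by contraction with `d`. -/
theorem contractLeft_prod_ι_eq_zero (d : Module.Dual R M) {k : ℕ} (b : Fin k → M)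
    (hd : ∀ i, d (b i) = 0) :
    CliffordAlgebra.contractLeft d
      (List.ofFn fun i => ExteriorAlgebra.ι R (b i)).prod = 0 := by
  induction k with
  | zero => simp
  | succ k ih =>
    rw [List.ofFn_succ, List.prod_cons, contractLeft_ι_wedge, hd, ih _ fun i => hd i.succ]
    simp

/-- A covector in the span of `b` is killed by wedging with the product of `b`. -/
theorem ι_mul_prod_ι_eq_zero {k : ℕ} (b : Fin k → M) {x : M}
    (hx : x ∈ Submodule.span R (Set.range b)) :
    ExteriorAlgebra.ι R x * (List.ofFn fun i => ExteriorAlgebra.ι R (b i)).prod = 0 := by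
  induction hx using Submodule.span_induction with
  | mem x h =>
    obtain ⟨i, rfl⟩ := h
    exact ExteriorAlgebra.ι_mul_prod_list b i
  | zero => simp
  | add x y _ _ hx hy => rw [map_add, add_mul, hx, hy, add_zero]
  | smul r x _ hx => rw [map_smul, smul_mul_assoc, hx, smul_zero]

/-- To prove a linear property of 2-vectors it suffices to check decomposable ones. -/
theorem exteriorPower_two_induction {p : ExteriorAlgebra R M → Prop}
    (hι : ∀ x y : M, p (ExteriorAlgebra.ι R x * ExteriorAlgebra.ι R y))
    (hadd : ∀ a b, p a → p b → p (a + b))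
    {a : ExteriorAlgebra R M} (ha : a ∈ ⋀[R]^2 M) : p a := by
  rw [ExteriorAlgebra.exteriorPower, pow_two] at ha
  refine Submodule.mul_induction_on ha ?_ hadd
  rintro _ ⟨x, rfl⟩ _ ⟨y, rfl⟩
  exact hι x y

theorem commute_of_mem_exteriorPower_two {a : ExteriorAlgebra R M} (ha : a ∈ ⋀[R]^2 M)
    (b : ExteriorAlgebra R M) : Commute a b := by
  refine exteriorPower_two_induction (p := fun a => Commute a b) (fun x y => ?_)
    (fun _ _ h h' => h.add_left h') ha
  induction b using ExteriorAlgebra.induction with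
  | algebraMap r => exact (Algebra.commutes r _).symm
  | ι z =>
    rw [commute_iff_eq, mul_assoc, ι_mul_ι_swap y z, mul_neg, ← mul_assoc, ι_mul_ι_swap x z,
      neg_mul, neg_neg, mul_assoc]
  | mul _ _ h h' => exact h.mul_right h'
  | add _ _ h h' => exact h.add_right h'

/-- Contraction satisfies the unsigned Leibniz rule when the left factor is a 2-vector. -/
theorem contractLeft_mul_of_mem_exteriorPower_two (d : Module.Dual R M)
    {a : ExteriorAlgebra R M} (ha : a ∈ ⋀[R]^2 M) (b : ExteriorAlgebra R M) :
    CliffordAlgebra.contractLeft d (a * b) =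
      CliffordAlgebra.contractLeft d a * b + a * CliffordAlgebra.contractLeft d b := by
  refine exteriorPower_two_induction (p := fun a => CliffordAlgebra.contractLeft d (a * b) =
      CliffordAlgebra.contractLeft d a * b + a * CliffordAlgebra.contractLeft d b)
    (fun x y => ?_) (fun a a' h h' => ?_) ha
  · rw [mul_assoc, contractLeft_ι_wedge, contractLeft_ι_wedge, contractLeft_ι_wedge,
      contractLeft_ι_eq, ← Algebra.commutes, ← Algebra.smul_def]
    simp only [mul_sub, sub_mul, smul_mul_assoc, mul_smul_comm, mul_assoc]
    abel
  · rw [add_mul, map_add, h, h', map_add, add_mul, add_mul]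
    abel

theorem contractLeft_pow_mul_of_mem_exteriorPower_two (d : Module.Dual R M)
    {a : ExteriorAlgebra R M} (ha : a ∈ ⋀[R]^2 M) (b : ExteriorAlgebra R M) (j : ℕ) :
    CliffordAlgebra.contractLeft d (a ^ (j + 1) * b) =
      ((j + 1 : ℕ) : R) • (CliffordAlgebra.contractLeft d a * (a ^ j * b)) +
        a ^ (j + 1) * CliffordAlgebra.contractLeft d b := by
  induction j with
  | zero => simpa using contractLeft_mul_of_mem_exteriorPower_two d ha b
  | succ j ih =>
    rw [pow_succ' a (j + 1), mul_assoc, contractLeft_mul_of_mem_exteriorPower_two d ha, ih,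
      mul_add, mul_smul_comm, ← mul_assoc a, (commute_of_mem_exteriorPower_two ha _).eq,
      mul_assoc _ a, ← mul_assoc a, ← pow_succ', ← mul_assoc a, ← pow_succ' a (j + 1),
      Nat.cast_succ (j + 1), add_smul, one_smul]
    abel

/-- Euler's identity for 2-vectors: `∑ eᵢ ∧ ι_{eⁱ} a = 2 a`. -/
theorem sum_ι_mul_contractLeft {I : Type*} [Fintype I] (f : I → M) (d : I → Module.Dual R M)
    (hfd : ∀ x : M, ∑ i, d i x • f i = x) {a : ExteriorAlgebra R M} (ha : a ∈ ⋀[R]^2 M) :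
    ∑ i, ExteriorAlgebra.ι R (f i) * CliffordAlgebra.contractLeft (d i) a = a + a := by
  refine exteriorPower_two_induction (p := fun a =>
    ∑ i, ExteriorAlgebra.ι R (f i) * CliffordAlgebra.contractLeft (d i) a = a + a)
    (fun x y => ?_) (fun a a' h h' => ?_) ha
  · have key (x y : M) : ∑ i, ExteriorAlgebra.ι R (f i) * (d i x • ExteriorAlgebra.ι R y) =
        ExteriorAlgebra.ι R x * ExteriorAlgebra.ι R y := by
      simp_rw [mul_smul_comm, ← smul_mul_assoc, ← Finset.sum_mul, ← map_smul, ← map_sum, hfd]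
    simp_rw [contractLeft_ι_wedge, contractLeft_ι_eq, ← Algebra.commutes, ← Algebra.smul_def,
      mul_sub, Finset.sum_sub_distrib, key]
    rw [ι_mul_ι_swap y x, sub_neg_eq_add]
  · simp_rw [map_add, mul_add, Finset.sum_add_distrib, h, h']
    abel

end Contraction

section Field

variable {K M : Type*} [Field K] [AddCommGroup M] [Module K M]

theorem prod_ι_ne_zero {k : ℕ} {b : Fin k → M} (hb : LinearIndependent K b) :
    (List.ofFn fun i => ExteriorAlgebra.ι K (b i)).prod ≠ 0 := by
  have h := (exteriorPower.ιMulti_family_linearIndependent_field (n := k) hb).ne_zero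
    (Set.powersetCard.ofFinEmbEquiv (RelEmbedding.refl _))
  rw [exteriorPower.ιMulti_family, Equiv.symm_apply_apply] at h
  rw [← ExteriorAlgebra.ιMulti_apply]
  exact fun h0 => h (Subtype.ext h0)

/-- A 2-vector on an `n`-dimensional space satisfies `a ^ (n + 1) = 0`. -/
theorem pow_finrank_succ_eq_zero [FiniteDimensional K M] {a : ExteriorAlgebra K M}
    (ha : a ∈ ⋀[K]^2 M) : a ^ (Module.finrank K M + 1) = 0 := by
  set n := Module.finrank K M
  have hmem : a ^ (n + 1) ∈ ⋀[K]^(2 * (n + 1)) M := by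
    rw [ExteriorAlgebra.exteriorPower, pow_mul]
    exact Submodule.pow_mem_pow _ ha _
  have hfin : Module.finrank K (⋀[K]^(2 * (n + 1)) M) = 0 := by
    rw [exteriorPower.finrank_eq]
    exact Nat.choose_eq_zero_of_lt (by omega)
  have := Module.finrank_zero_iff.mp hfin
  exact congrArg Subtype.val (Subsingleton.elim (⟨_, hmem⟩ : ⋀[K]^(2 * (n + 1)) M) 0)

end Field

section Spinor

variable {V : Type*} [AddCommGroup V] [Module ℝ V]

/-- The Clifford relation for the spinor action. -/
theorem rho_rho_add_rho_rho (w e : V × Module.Dual ℝ V)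
    (φ : ExteriorAlgebra ℝ (Module.Dual ℝ V)) :
    rho w (rho e φ) + rho e (rho w φ) = vPair w e • φ := by
  have h := CliffordAlgebra.contractLeft_comm (Q := (0 : QuadraticForm ℝ (Module.Dual ℝ V)))
    (Module.Dual.eval ℝ V w.1) (Module.Dual.eval ℝ V e.1) φ
  simp only [rho, map_add, mul_add, contractLeft_ι_wedge, ← mul_assoc]
  rw [ι_mul_ι_swap w.2 e.2, h, vPair, add_smul]
  simp only [Module.Dual.eval_apply, neg_mul]
  abel

variable [FiniteDimensional ℝ V] {a : ExteriorAlgebra ℝ (Module.Dual ℝ V)} {k : ℕ}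
  (b : Fin k → Module.Dual ℝ V)

theorem expSpinor_eq_sum (a : ExteriorAlgebra ℝ (Module.Dual ℝ V)) :
    expSpinor a b = ∑ j ∈ Finset.range (Module.finrank ℝ V + 1),
      ((-1 : ℝ) ^ j / (j.factorial : ℝ)) •
        (a ^ j * (List.ofFn fun i => ExteriorAlgebra.ι ℝ (b i)).prod) := by
  simp_rw [expSpinor, Finset.sum_mul, smul_mul_assoc]

theorem expSpinor_ne_zero (ha : a ∈ ⋀[ℝ]^2 (Module.Dual ℝ V)) (hb : LinearIndependent ℝ b) :
    expSpinor a b ≠ 0 := by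
  have hnil : IsNilpotent a := ⟨_, pow_finrank_succ_eq_zero ha⟩
  rw [expSpinor, Finset.sum_range_succ']
  have hfac : ∑ j ∈ Finset.range (Module.finrank ℝ V),
      ((-1 : ℝ) ^ (j + 1) / ((j + 1).factorial : ℝ)) • a ^ (j + 1) =
      a * ∑ j ∈ Finset.range (Module.finrank ℝ V),
        ((-1 : ℝ) ^ (j + 1) / ((j + 1).factorial : ℝ)) • a ^ j := by
    simp_rw [Finset.mul_sum, mul_smul_comm, ← pow_succ']
  have hunit := ((commute_of_mem_exteriorPower_two ha
    (∑ j ∈ Finset.range (Module.finrank ℝ V),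
      ((-1 : ℝ) ^ (j + 1) / ((j + 1).factorial : ℝ)) • a ^ j)).isNilpotent_mul_right
        hnil).isUnit_add_one
  rw [← hfac] at hunit
  simpa [hunit.mul_right_eq_zero] using prod_ι_ne_zero hb

theorem mul_expSpinor (ha : a ∈ ⋀[ℝ]^2 (Module.Dual ℝ V))
    (x : ExteriorAlgebra ℝ (Module.Dual ℝ V)) :
    x * expSpinor a b = (∑ j ∈ Finset.range (Module.finrank ℝ V + 1),
      ((-1 : ℝ) ^ j / (j.factorial : ℝ)) • a ^ j) *
        (x * (List.ofFn fun i => ExteriorAlgebra.ι ℝ (b i)).prod) := by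
  have h : Commute (∑ j ∈ Finset.range (Module.finrank ℝ V + 1),
      ((-1 : ℝ) ^ j / (j.factorial : ℝ)) • a ^ j) x :=
    Commute.sum_left _ _ _ fun j _ =>
      ((commute_of_mem_exteriorPower_two ha x).pow_left j).smul_left _
  rw [expSpinor, ← mul_assoc, ← mul_assoc, h.eq]

/-- If `d` kills all `b i`, then `ι_d (e^{-a} ∧ μ) = -(ι_d a) ∧ e^{-a} ∧ μ`. -/
theorem contractLeft_expSpinor (ha : a ∈ ⋀[ℝ]^2 (Module.Dual ℝ V))
    (d : Module.Dual ℝ (Module.Dual ℝ V)) (hd : ∀ i, d (b i) = 0) :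
    CliffordAlgebra.contractLeft d (expSpinor a b) =
      -(CliffordAlgebra.contractLeft d a * expSpinor a b) := by
  have hμ := contractLeft_prod_ι_eq_zero d b hd
  have hpow : a ^ (Module.finrank ℝ V + 1) = 0 := by
    simpa only [Subspace.dual_finrank_eq] using pow_finrank_succ_eq_zero ha
  have hlong : expSpinor a b = ∑ j ∈ Finset.range (Module.finrank ℝ V + 1 + 1),
      ((-1 : ℝ) ^ j / (j.factorial : ℝ)) •
        (a ^ j * (List.ofFn fun i => ExteriorAlgebra.ι ℝ (b i)).prod) := by
    rw [Finset.sum_range_succ, hpow, zero_mul, smul_zero, add_zero, expSpinor_eq_sum]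
  conv_lhs => rw [hlong]
  rw [map_sum, Finset.sum_range_succ', expSpinor_eq_sum, Finset.mul_sum,
    ← Finset.sum_neg_distrib]
  simp only [map_smul, pow_zero, one_mul, hμ, smul_zero, add_zero]
  refine Finset.sum_congr rfl fun j _ => ?_
  rw [contractLeft_pow_mul_of_mem_exteriorPower_two d ha, hμ, mul_zero, add_zero, smul_smul,
    mul_smul_comm, ← neg_smul]
  congr 1
  have := Nat.factorial_ne_zero j
  rw [Nat.factorial_succ]
  push_cast
  field_simp
  ring

/-- The spinor `e^{-a} ∧ μ` depends on `a` only through `a ∧ μ`. -/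
theorem expSpinor_congr {a' : ExteriorAlgebra ℝ (Module.Dual ℝ V)}
    (ha : a ∈ ⋀[ℝ]^2 (Module.Dual ℝ V))
    (h : a' * (List.ofFn fun i => ExteriorAlgebra.ι ℝ (b i)).prod =
      a * (List.ofFn fun i => ExteriorAlgebra.ι ℝ (b i)).prod) :
    expSpinor a' b = expSpinor a b := by
  rw [expSpinor_eq_sum, expSpinor_eq_sum]
  refine Finset.sum_congr rfl fun j hj => congrArg _ ?_
  clear hj
  induction j with
  | zero => simp
  | succ j ih =>
    rw [pow_succ', mul_assoc, ih, ← mul_assoc,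
      ← ((commute_of_mem_exteriorPower_two ha a').pow_left j).eq, mul_assoc, h, ← mul_assoc,
      ← pow_succ]

/-- A 2-form `η` on `V` vanishing on `S × S` wedges to zero with the top exterior power of
`ann(S)`. -/
theorem mul_prod_ι_eq_zero_of_vanishing (S : Submodule ℝ V)
    (hb : Submodule.span ℝ (Set.range b) = S.dualAnnihilator)
    (ha : a ∈ ⋀[ℝ]^2 (Module.Dual ℝ V)) (η : V →ₗ[ℝ] V →ₗ[ℝ] ℝ)
    (hη : ∀ v ∈ S, ∀ w ∈ S, η v w = 0)
    (hcontr : ∀ v : V, CliffordAlgebra.contractLeft (Module.Dual.eval ℝ V v) a =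
      ExteriorAlgebra.ι ℝ (η v)) :
    a * (List.ofFn fun i => ExteriorAlgebra.ι ℝ (b i)).prod = 0 := by
  obtain ⟨T, hT⟩ := S.exists_isCompl
  let e := ((finBasis ℝ S).prod (finBasis ℝ T)).map (Submodule.prodEquivOfIsCompl S T hT)
  have hdual (x : Module.Dual ℝ V) :
      ∑ i, (Module.Dual.eval ℝ V (e i)) x • e.coord i = x := by
    refine e.ext fun j => ?_
    simp
  have hsum := sum_ι_mul_contractLeft e.coord (fun i => Module.Dual.eval ℝ V (e i)) hdual ha
  have hzero : (a + a) * (List.ofFn fun i => ExteriorAlgebra.ι ℝ (b i)).prod = 0 := by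
    rw [← hsum, Finset.sum_mul]
    refine Finset.sum_eq_zero fun i _ => ?_
    rw [hcontr]
    rcases i with i | i
    · rw [mul_assoc, ι_mul_prod_ι_eq_zero, mul_zero]
      rw [hb, Submodule.mem_dualAnnihilator]
      refine hη _ ?_
      simp [e]
    · rw [ι_mul_ι_swap, neg_mul, mul_assoc, ι_mul_prod_ι_eq_zero, mul_zero, neg_zero]
      rw [hb, Submodule.mem_dualAnnihilator]
      intro w hw
      have hw' : (Submodule.prodEquivOfIsCompl S T hT).symm w = (⟨w, hw⟩, 0) :=
        Submodule.prodEquivOfIsCompl_symm_apply_left S T hT ⟨w, hw⟩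
      simp [e, hw']
  rw [add_mul, ← two_smul ℝ] at hzero
  exact (smul_eq_zero.mp hzero).resolve_left two_ne_zero

end Spinor

/-- Let `E ⊂ 𝕍 = V ⊕ V*` be a Lagrangian subspace with range
`S = pr_V(E)`, let `ω` be any alternating 2-form on `V` extending the canonical 2-form
`ω_S` of `E` (i.e. `ω(v₁,v₂) = α₁(v₂)` for `vᵢ ⊕ αᵢ ∈ E`), represented by the degree-2
element `ωel ∈ Λ²V*` (characterized by `ι_v ωel = ω(v,·)` for all `v`), and let
`μ = b₁ ∧ ⋯ ∧ b_k ≠ 0` where `b` is a basis of `ann(S)`.  Then `φ = e^{−ω} ∧ μ` is a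
pure spinor with `N_φ = E`, and `φ` is independent of the chosen extension `ω`. -/
theorem stmt17 {V : Type*} [AddCommGroup V] [Module ℝ V] [FiniteDimensional ℝ V]
    (E : Submodule ℝ (V × Module.Dual ℝ V))
    (hE : (E : Set (V × Module.Dual ℝ V)) = vPerp (E : Set _))
    (ω : V →ₗ[ℝ] V →ₗ[ℝ] ℝ) (halt : ∀ v, ω v v = 0)
    (hext : ∀ p ∈ E, ∀ q ∈ E, ω (Prod.fst p) (Prod.fst q) = Prod.snd p (Prod.fst q))
    (ωel : ExteriorAlgebra ℝ (Module.Dual ℝ V))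
    (hdeg : ωel ∈ ⋀[ℝ]^2 (Module.Dual ℝ V))
    (hcontr : ∀ v : V,
      CliffordAlgebra.contractLeft (Module.Dual.eval ℝ V v) ωel =
        ExteriorAlgebra.ι ℝ (ω v))
    {k : ℕ} (b : Fin k → Module.Dual ℝ V) (hli : LinearIndependent ℝ b)
    (hb : Submodule.span ℝ (Set.range b) =
      Submodule.dualAnnihilator (E.map (LinearMap.fst ℝ V (Module.Dual ℝ V)))) :
    expSpinor ωel b ≠ 0 ∧
    nullSet (expSpinor ωel b) = (E : Set (V × Module.Dual ℝ V)) ∧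
    (∀ (ω' : V →ₗ[ℝ] V →ₗ[ℝ] ℝ), (∀ v, ω' v v = 0) →
      (∀ p ∈ E, ∀ q ∈ E, ω' (Prod.fst p) (Prod.fst q) = Prod.snd p (Prod.fst q)) →
      ∀ ωel' : ExteriorAlgebra ℝ (Module.Dual ℝ V),
        ωel' ∈ ⋀[ℝ]^2 (Module.Dual ℝ V) →
        (∀ v : V,
          CliffordAlgebra.contractLeft (Module.Dual.eval ℝ V v) ωel' =
            ExteriorAlgebra.ι ℝ (ω' v)) →
        expSpinor ωel' b = expSpinor ωel b) := by
  have hne := expSpinor_ne_zero b hdeg hli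
  have hsub : ∀ w ∈ E, rho w (expSpinor ωel b) = 0 := by
    intro w hw
    have hd : ∀ i, Module.Dual.eval ℝ V w.1 (b i) = 0 := by
      intro i
      have hbi : b i ∈ Submodule.dualAnnihilator (E.map (LinearMap.fst ℝ V (Module.Dual ℝ V))) :=
        hb ▸ Submodule.subset_span (Set.mem_range_self i)
      exact (Submodule.mem_dualAnnihilator _).mp hbi _ (Submodule.mem_map_of_mem hw)
    have hann : w.2 - ω w.1 ∈ Submodule.span ℝ (Set.range b) := by
      rw [hb, Submodule.mem_dualAnnihilator]
      rintro _ ⟨q, hq, rfl⟩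
      simp [hext w hw q hq]
    rw [rho, contractLeft_expSpinor b hdeg _ hd, hcontr, ← sub_eq_add_neg, ← sub_mul, ← map_sub,
      mul_expSpinor b hdeg, ι_mul_prod_ι_eq_zero b hann, mul_zero]
  refine ⟨hne, Set.Subset.antisymm (fun w hw => ?_) hsub, ?_⟩
  · rw [hE]
    intro e he
    have h := rho_rho_add_rho_rho w e (expSpinor ωel b)
    have hw' : rho w (expSpinor ωel b) = 0 := hw
    rw [hsub e he, hw'] at h
    have h0 : vPair w e • expSpinor ωel b = 0 := by
      rw [← h]
      simp [rho]
    exact (smul_eq_zero.mp h0).resolve_right hne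
  · intro ω' _ hext' ωel' hdeg' hcontr'
    refine expSpinor_congr b hdeg ?_
    rw [← sub_eq_zero, ← sub_mul]
    refine mul_prod_ι_eq_zero_of_vanishing b _ hb (Submodule.sub_mem _ hdeg' hdeg) (ω' - ω) ?_
      fun v => ?_
    · rintro _ ⟨p, hp, rfl⟩ _ ⟨q, hq, rfl⟩
      simp [hext p hp q hq, hext' p hp q hq]
    · rw [map_sub, hcontr, hcontr', LinearMap.sub_apply, map_sub]
end
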